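/- Let F = {f_1,…,f_m} be a CPLIFS whose generated self-similar IFS S_F has no exact overlapping. Then for every ε > 0 there exists δ > 0 such that every CPLIFS F̂ = {f̂_1,…,f̂_m} that is δ-close to F satisfies |s_F − s_{F̂}| < ε, where s_F and s_{F̂} denote the natural dimensions of F and F̂. -/

import Mathlib

open Set Filter MeasureTheory

noncomputable section

/-- Composition `f_{i₁} ∘ ⋯ ∘ f_{iₙ}` of a family of maps of `ℝ` along a finite word
(the empty composition being the identity). -/
def compFam {ι : Type*} (S : ι → ℝ → ℝ) (w : List ι) : ℝ → ℝ :=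
  w.foldr (fun k g => S k ∘ g) id

/-- A family of maps of `ℝ` has *no exact overlapping* if for every `n ≥ 1` and all words
`ī, j̄` of length `n`, equality of the compositions `S_ī = S_j̄` (as functions) implies
`ī = j̄`. -/
def NoExactOverlap {ι : Type*} (S : ι → ℝ → ℝ) : Prop :=
  ∀ n : ℕ, 1 ≤ n → ∀ i j : Fin n → ι,
    compFam S (List.ofFn i) = compFam S (List.ofFn j) → i = j

/-- The supporting interval `I` of the system `{f_1, …, f_m}`:  if the maps have a common
fixed point `φ` (i.e. the attractor is the single point `φ`) it is `[φ - 1/2, φ + 1/2]`;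
otherwise it is the smallest nonempty compact interval sent into itself by all the maps,
i.e. the intersection of all such intervals. -/
def suppInt {m : ℕ} (f : Fin m → ℝ → ℝ) : Set ℝ :=
  haveI := Classical.propDecidable (∃ φ : ℝ, ∀ k, f k φ = φ)
  if h : ∃ φ : ℝ, ∀ k, f k φ = φ then
    Set.Icc (h.choose - 1 / 2) (h.choose + 1 / 2)
  else
    ⋂₀ {J : Set ℝ | J.Nonempty ∧ (∃ a b : ℝ, J = Set.Icc a b) ∧ ∀ k, f k '' J ⊆ J}

/-- The natural pressure function
`Φ(s) = limsup_{n → ∞} (1/n) log ∑_{(i₁,…,iₙ)} |I_{i₁…iₙ}|ˢ`,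
where `I_{i₁…iₙ} = f_{i₁} ∘ ⋯ ∘ f_{iₙ} (I)` are the cylinder intervals and `|·|` denotes
the length (diameter) of an interval. -/
def pressure {m : ℕ} (f : Fin m → ℝ → ℝ) (s : ℝ) : ℝ :=
  Filter.limsup
    (fun n : ℕ =>
      (n : ℝ)⁻¹ * Real.log (∑ w : Fin n → Fin m,
        Metric.diam (compFam f (List.ofFn w) '' suppInt f) ^ s))
    Filter.atTop

/-- A continuous piecewise linear iterated function system (CPLIFS) consisting of `m ≥ 2`
continuous piecewise linear maps `f k : ℝ → ℝ`; the map `f k` has the `l k` breaking points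
`b k 0 < … < b k (l k - 1)` and on the `i`-th open interval of linearity determined by them
it coincides with the affine map `x ↦ ρ k i * x + t k i`, where the slopes satisfy
`0 < |ρ k i| < 1` and consecutive slopes of each map are distinct. -/
structure CPLIFS (m : ℕ) (l : Fin m → ℕ) : Type where
  f : Fin m → ℝ → ℝ
  b : (k : Fin m) → Fin (l k) → ℝ
  ρ : (k : Fin m) → Fin (l k + 1) → ℝ
  t : (k : Fin m) → Fin (l k + 1) → ℝ
  hm : 2 ≤ m
  hb : ∀ k, StrictMono (b k)
  hρ0 : ∀ k i, ρ k i ≠ 0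
  hρ1 : ∀ k i, |ρ k i| < 1
  hconsec : ∀ k (i : Fin (l k)), ρ k i.castSucc ≠ ρ k i.succ
  hcont : ∀ k, Continuous (f k)
  haff : ∀ (k : Fin m) (i : Fin (l k + 1)) (x : ℝ),
    (∀ j : Fin (l k), (j : ℕ) < (i : ℕ) → b k j < x) →
    (∀ j : Fin (l k), (i : ℕ) ≤ (j : ℕ) → x < b k j) →
    f k x = ρ k i * x + t k i

namespace CPLIFS

variable {m : ℕ} {l : Fin m → ℕ}

/-- The index set of the affine pieces of a CPLIFS. -/
abbrev Idx (m : ℕ) (l : Fin m → ℕ) := Σ k : Fin m, Fin (l k + 1)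

/-- The self-similar IFS generated by a CPLIFS: the family of affine maps
`S_{k,i} x = ρ_{k,i} x + t_{k,i}` coinciding with `f k` on its `i`-th interval of
linearity. -/
def S (F : CPLIFS m l) (p : Idx m l) : ℝ → ℝ :=
  fun x => F.ρ p.1 p.2 * x + F.t p.1 p.2

/-- The supporting interval of a CPLIFS. -/
def supp (F : CPLIFS m l) : Set ℝ := suppInt F.f

/-- `𝓘 = f_1(I) ∪ … ∪ f_m(I)`. -/
def bigI (F : CPLIFS m l) : Set ℝ := ⋃ k, F.f k '' F.supp

/-- The `i`-th open interval of linearity of `f k`. -/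
def J (F : CPLIFS m l) (k : Fin m) (i : Fin (l k + 1)) : Set ℝ :=
  {x : ℝ | (∀ j : Fin (l k), (j : ℕ) < (i : ℕ) → F.b k j < x) ∧
           (∀ j : Fin (l k), (i : ℕ) ≤ (j : ℕ) → x < F.b k j)}

/-- The set of critical points of a CPLIFS: the `f k`-images of the endpoints of `I` and of
the breaking points, together with the points of `𝓘` at which two different branches
(local inverses of affine pieces) agree. -/
def crit (F : CPLIFS m l) : Set ℝ :=
  (⋃ k, ({F.f k (sInf F.supp), F.f k (sSup F.supp)} : Set ℝ)) ∪
  (⋃ k, ⋃ j : Fin (l k), ({F.f k (F.b k j)} : Set ℝ)) ∪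
  {x ∈ F.bigI | ∃ p q : Idx m l, p ≠ q ∧
      x ∈ F.f p.1 '' F.J p.1 p.2 ∧ x ∈ F.f q.1 '' F.J q.1 q.2 ∧
      (x - F.t p.1 p.2) / F.ρ p.1 p.2 = (x - F.t q.1 q.2) / F.ρ q.1 q.2}

/-- `Z : Fin N → ℝ × ℝ` is an (ordered) monotonicity partition of the CPLIFS `F` if the
closed intervals `[Z i .1, Z i .2]` are nondegenerate, ordered, cover `𝓘`, their endpoints
are critical points, and their interiors contain no critical point. -/
def IsMonoPartition (F : CPLIFS m l) (N : ℕ) (Z : Fin N → ℝ × ℝ) : Prop :=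
  (∀ i, (Z i).1 < (Z i).2) ∧
  (∀ i j : Fin N, i < j → (Z i).2 ≤ (Z j).1) ∧
  (⋃ i, Set.Icc (Z i).1 (Z i).2) = F.bigI ∧
  (∀ i, (Z i).1 ∈ F.crit ∧ (Z i).2 ∈ F.crit) ∧
  (∀ i, Set.Ioo (Z i).1 (Z i).2 ∩ F.crit = ∅)

/-- Two CPLIFSs (necessarily with the same number of maps and the same numbers of breaking
points) are ε-close if (a) their monotonicity partitions have the same cardinality and
corresponding intervals have endpoints within ε, (c) the logarithms of the absolute values
of corresponding slopes differ by less than ε, and (d) `sup_x |f_k x - g_k x| < ε`. -/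
def Close (ε : ℝ) (F G : CPLIFS m l) : Prop :=
  (∃ (N : ℕ) (Z W : Fin N → ℝ × ℝ), F.IsMonoPartition N Z ∧ G.IsMonoPartition N W ∧
      ∀ i, |(Z i).1 - (W i).1| < ε ∧ |(Z i).2 - (W i).2| < ε) ∧
  (∀ k i, abs (Real.log |F.ρ k i| - Real.log |G.ρ k i|) < ε) ∧
  (∀ k x, |F.f k x - G.f k x| < ε)

end CPLIFS

/-
A word `w` has cylinder length `exp (d w)`, and the pressure at `s` is the growth rate of the
partition sums of `exp (s * d w)`. Since `d` decreases at least linearly in the length of `w`, the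
pressure is strictly decreasing in `s`, with slope bounded away from `0`; hence it suffices that
the functions `d` of `F` and of a nearby system `G` differ by at most `C + η * |w|` with `η` small.

Each additional map changes this difference by a bounded amount, and it changes it by the small
difference of the logarithms of two corresponding slopes if the cylinder is short and far from the
break points of the next map. Without exact overlaps no break point is periodic, so the orbits
returning to a small neighbourhood of a break point need arbitrarily long time to do so. The
visits to the break points are therefore rare, and their total effect is at most `η * |w|`.
-/

open scoped NNReal Topology Pointwise

section WordPressure

variable {ι : Type*} [Fintype ι]

/-- The logarithmic growth rate at level `n` of the partition sums of a potential `ψ` on finite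
words. -/
def wordPressureSeq (ψ : List ι → ℝ) (n : ℕ) : ℝ :=
  (n : ℝ)⁻¹ * Real.log (∑ w : Fin n → ι, Real.exp (ψ (List.ofFn w)))

/-- The topological pressure of a potential on finite words over `ι`; the natural pressure
`Φ(s)` is the pressure of `w ↦ s log |I_w|`. -/
def wordPressure (ψ : List ι → ℝ) : ℝ :=
  limsup (wordPressureSeq ψ) atTop

lemma wordPressureSeq_zero {n : ℕ} (hn : n ≠ 0) :
    wordPressureSeq (fun _ : List ι => 0) n = Real.log (Fintype.card ι) := by
  simp [wordPressureSeq, hn]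

variable [Nonempty ι] {ψ φ : List ι → ℝ} {c₀ c₁ : ℝ}

lemma wordPressureSeq_le_add (h : ∀ w, ψ w ≤ φ w + c₀ + c₁ * w.length) {n : ℕ} (hn : n ≠ 0) :
    wordPressureSeq ψ n ≤ wordPressureSeq φ n + c₁ + c₀ / n := by
  have sum_pos (χ : List ι → ℝ) : 0 < ∑ w : Fin n → ι, Real.exp (χ (List.ofFn w)) :=
    Finset.sum_pos (fun _ _ => Real.exp_pos _) Finset.univ_nonempty
  have sum_le : ∑ w : Fin n → ι, Real.exp (ψ (List.ofFn w)) ≤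
      Real.exp (c₀ + c₁ * n) * ∑ w : Fin n → ι, Real.exp (φ (List.ofFn w)) := by
    rw [Finset.mul_sum]
    gcongr with w
    rw [← Real.exp_add, Real.exp_le_exp]
    have := h (List.ofFn w)
    rw [List.length_ofFn] at this
    linarith
  have log_le := Real.log_le_log (sum_pos ψ) sum_le
  rw [Real.log_mul (Real.exp_pos _).ne' (sum_pos φ).ne', Real.log_exp] at log_le
  calc wordPressureSeq ψ n
      ≤ (n : ℝ)⁻¹ * (c₀ + c₁ * n + Real.log (∑ w : Fin n → ι, Real.exp (φ (List.ofFn w)))) :=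
        mul_le_mul_of_nonneg_left log_le (by positivity)
    _ = wordPressureSeq φ n + c₁ + c₀ / n := by
        unfold wordPressureSeq
        field_simp
        ring

lemma isBoundedUnder_le_wordPressureSeq (h : ∀ w, ψ w ≤ c₀ + c₁ * w.length) :
    IsBoundedUnder (· ≤ ·) atTop (wordPressureSeq ψ) := by
  refine isBoundedUnder_of_eventually_le (a := Real.log (Fintype.card ι) + c₁ + |c₀|) ?_
  filter_upwards [eventually_ge_atTop 1] with n hn
  have key := wordPressureSeq_le_add (φ := fun _ => 0) (by simpa using h) (n := n) (by omega)
  rw [wordPressureSeq_zero (by omega)] at key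
  have : c₀ / n ≤ |c₀| := (div_le_div_of_nonneg_right (le_abs_self c₀) n.cast_nonneg).trans
    (div_le_self (abs_nonneg c₀) (by exact_mod_cast hn))
  linarith

lemma isBoundedUnder_ge_wordPressureSeq (h : ∀ w, c₀ + c₁ * w.length ≤ ψ w) :
    IsBoundedUnder (· ≥ ·) atTop (wordPressureSeq ψ) := by
  refine isBoundedUnder_of_eventually_ge (a := Real.log (Fintype.card ι) + c₁ - |c₀|) ?_
  filter_upwards [eventually_ge_atTop 1] with n hn
  have key := wordPressureSeq_le_add (ψ := fun _ => 0) (φ := ψ) (c₀ := -c₀) (c₁ := -c₁)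
    (fun w => by linarith [h w]) (n := n) (by omega)
  rw [wordPressureSeq_zero (by omega)] at key
  have : -c₀ / n ≤ |c₀| := (div_le_div_of_nonneg_right (neg_le_abs c₀) n.cast_nonneg).trans
    (div_le_self (abs_nonneg c₀) (by exact_mod_cast hn))
  linarith

lemma wordPressure_le_add {a₀ a₁ b₀ b₁ : ℝ} (hψ : ∀ w, a₀ + a₁ * w.length ≤ ψ w)
    (hφ : ∀ w, φ w ≤ b₀ + b₁ * w.length) (h : ∀ w, ψ w ≤ φ w + c₀ + c₁ * w.length) :
    wordPressure ψ ≤ wordPressure φ + c₁ := by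
  refine le_of_forall_pos_le_add fun ε hε => ?_
  have seq_lt : ∀ᶠ n in atTop, wordPressureSeq φ n < wordPressure φ + ε / 2 :=
    eventually_lt_of_limsup_lt (lt_add_of_pos_right _ (half_pos hε))
      (isBoundedUnder_le_wordPressureSeq hφ)
  have div_lt : ∀ᶠ n : ℕ in atTop, c₀ / n < ε / 2 :=
    (tendsto_const_div_atTop_nhds_zero_nat c₀).eventually_lt_const (half_pos hε)
  refine limsup_le_of_le (isBoundedUnder_ge_wordPressureSeq hψ).isCoboundedUnder_le ?_
  filter_upwards [seq_lt, div_lt, eventually_ne_atTop 0] with n hseq hdiv hn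
  linarith [wordPressureSeq_le_add h hn]

lemma abs_sub_mul_le_of_wordPressure_eq_zero {d e : List ι → ℝ} {a b C η lam Lam s t : ℝ}
    (hd_le : ∀ w, d w ≤ a - lam * w.length) (hd_ge : ∀ w, b - Lam * w.length ≤ d w)
    (hde : ∀ w, |e w - d w| ≤ C + η * w.length) (hs : 0 ≤ s) (ht : 0 ≤ t)
    (hsd : wordPressure (fun w => s * d w) = 0) (hte : wordPressure (fun w => t * e w) = 0) :
    |s - t| * lam ≤ η * t := by
  have he_sub w : e w - d w ≤ C + η * w.length := (abs_le.1 (hde w)).2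
  have hd_sub w : d w - e w ≤ C + η * w.length := by linarith [(abs_le.1 (hde w)).1]
  rcases le_total s t with hst | hts
  · have key : wordPressure (fun w => t * e w) ≤
        wordPressure (fun w => s * d w) + (t * η - (t - s) * lam) :=
      wordPressure_le_add (a₀ := t * (b - C)) (a₁ := -t * (Lam + η)) (b₀ := s * a)
        (b₁ := -s * lam) (c₀ := t * C + (t - s) * a)
        (fun w => by
          linarith [mul_le_mul_of_nonneg_left (hd_ge w) ht,
            mul_le_mul_of_nonneg_left (hd_sub w) ht])
        (fun w => by linarith [mul_le_mul_of_nonneg_left (hd_le w) hs])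
        (fun w => by
          linarith [mul_le_mul_of_nonneg_left (he_sub w) ht,
            mul_le_mul_of_nonneg_left (hd_le w) (sub_nonneg.2 hst)])
    rw [abs_sub_comm, abs_of_nonneg (sub_nonneg.2 hst)]
    linarith
  · have key : wordPressure (fun w => s * d w) ≤
        wordPressure (fun w => t * e w) + (t * η - (s - t) * lam) :=
      wordPressure_le_add (a₀ := s * b) (a₁ := -s * Lam) (b₀ := t * (a + C))
        (b₁ := t * (η - lam)) (c₀ := t * C + (s - t) * a)
        (fun w => by linarith [mul_le_mul_of_nonneg_left (hd_ge w) hs])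
        (fun w => by
          linarith [mul_le_mul_of_nonneg_left (hd_le w) ht,
            mul_le_mul_of_nonneg_left (he_sub w) ht])
        (fun w => by
          linarith [mul_le_mul_of_nonneg_left (hd_sub w) ht,
            mul_le_mul_of_nonneg_left (hd_le w) (sub_nonneg.2 hts)])
    rw [abs_of_nonneg (sub_nonneg.2 hts)]
    linarith

end WordPressure

section RealFunctions

lemma mem_closure_of_mem_nhdsWithin {X : Type*} [TopologicalSpace X] {s t : Set X} {x : X}
    [(𝓝[t] x).NeBot] (hs : s ∈ 𝓝[t] x) : x ∈ closure s :=
  mem_closure_iff_clusterPt.2 <|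
    NeBot.mono ‹_› (le_inf nhdsWithin_le_nhds (le_principal_iff.2 hs))

lemma lipschitzWith_of_hasDerivWithinAt_Ici {E : Type*} [NormedAddCommGroup E] [NormedSpace ℝ E]
    {f : ℝ → E} {K : ℝ≥0} (hf : Continuous f)
    (hf' : ∀ x, ∃ f', HasDerivWithinAt f f' (Ici x) x ∧ ‖f'‖ ≤ K) : LipschitzWith K f := by
  choose f' hderiv hbound using hf'
  refine LipschitzWith.of_dist_le_mul fun x y => ?_
  wlog hyx : y ≤ x generalizing x y
  · simpa only [dist_comm] using this y x (le_of_not_ge hyx)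
  rw [dist_eq_norm, Real.dist_eq, abs_of_nonneg (sub_nonneg.2 hyx)]
  exact norm_image_sub_le_of_norm_deriv_right_le_segment hf.continuousOn (fun z _ => hderiv z)
    (fun z _ => hbound z) x (right_mem_Icc.2 hyx)

lemma diam_image_of_eqOn_affine {f : ℝ → ℝ} {a c : ℝ} {T : Set ℝ}
    (h : EqOn f (fun x => a * x + c) T) : Metric.diam (f '' T) = |a| * Metric.diam T := by
  have image_eq : f '' T = (fun x => x + c) '' (a • T) := by
    rw [← image_smul, image_image]
    exact image_congr h
  have isometry_add : Isometry fun x : ℝ => x + c := (IsometryEquiv.addRight c).isometry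
  rw [image_eq, isometry_add.diam_image, diam_smul₀, Real.norm_eq_abs]

lemma diam_le_card_div_mul_diam_image {κ : Type*} [Fintype κ] {f : ℝ → ℝ} {a c : κ → ℝ} {α : ℝ}
    {T : Set ℝ} (hα : 0 < α) (ha : ∀ i, α ≤ |a i|) (hf : ∀ x ∈ T, ∃ i, f x = a i * x + c i)
    (hT : T.OrdConnected) (hfT : Bornology.IsBounded (f '' T)) :
    Metric.diam T ≤ Fintype.card κ / α * Metric.diam (f '' T) := by
  set D := Metric.diam (f '' T)
  let P : κ → Set ℝ := fun i => {x ∈ T | f x = a i * x + c i}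
  have volume_piece_le (i : κ) : volume (P i) ≤ ENNReal.ofReal (D / α) := by
    refine (Real.volume_le_diam _).trans (Metric.ediam_le fun x hx y hy => ?_)
    rw [edist_dist]
    refine ENNReal.ofReal_le_ofReal ((le_div_iff₀' hα).2 ?_)
    calc α * dist x y ≤ |a i| * dist x y := by gcongr; exact ha i
      _ = dist (f x) (f y) := by
        rw [hx.2, hy.2, dist_add_right, Real.dist_eq, Real.dist_eq, ← mul_sub, abs_mul]
      _ ≤ D := Metric.dist_le_diam_of_mem hfT (mem_image_of_mem f hx.1) (mem_image_of_mem f hy.1)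
  have : 0 ≤ D := Metric.diam_nonneg
  refine Metric.diam_le_of_forall_dist_le (by positivity) fun x hx y hy => ?_
  have cover : uIcc y x ⊆ ⋃ i, P i := fun z hz =>
    have hzT := hT.uIcc_subset hy hx hz
    let ⟨i, hi⟩ := hf z hzT
    mem_iUnion.2 ⟨i, hzT, hi⟩
  have volume_le : volume (uIcc y x) ≤ ENNReal.ofReal (Fintype.card κ / α * D) :=
    calc volume (uIcc y x) ≤ ∑ i, volume (P i) :=
          (measure_mono cover).trans (measure_iUnion_fintype_le _ _)
      _ ≤ ∑ _i : κ, ENNReal.ofReal (D / α) := Finset.sum_le_sum fun i _ => volume_piece_le i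
      _ = ENNReal.ofReal (Fintype.card κ / α * D) := by
          rw [Finset.sum_const, Finset.card_univ, nsmul_eq_mul, ← ENNReal.ofReal_natCast,
            ← ENNReal.ofReal_mul (Nat.cast_nonneg _), mul_div_assoc', div_mul_eq_mul_div]
  rw [Real.volume_interval] at volume_le
  exact (ENNReal.ofReal_le_ofReal_iff (by positivity)).1 volume_le

lemma affine_comp_comm_of_common_fixedPoint {f g : ℝ → ℝ} {a b c d x₀ : ℝ}
    (hf : ∀ x, f x = a * x + b) (hg : ∀ x, g x = c * x + d) (hfx : f x₀ = x₀) (hgx : g x₀ = x₀) :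
    f ∘ g = g ∘ f := by
  rw [hf] at hfx
  rw [hg] at hgx
  funext x
  simp only [Function.comp_apply, hf, hg]
  linear_combination (1 - c) * hfx - (1 - a) * hgx

lemma exists_fin_cut {α : Type*} [LinearOrder α] {n : ℕ} {b : Fin n → α} (hb : Monotone b)
    (x : α) : ∃ i : Fin (n + 1),
      (∀ j : Fin n, (j : ℕ) < i → b j ≤ x) ∧ ∀ j : Fin n, (i : ℕ) ≤ j → x < b j := by
  classical
  have hex : ∃ i : ℕ, ∀ j : Fin n, i ≤ (j : ℕ) → x < b j := ⟨n, fun j hj => by omega⟩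
  have hle : Nat.find hex ≤ n := Nat.find_min' hex fun j hj => by omega
  refine ⟨⟨Nat.find hex, by omega⟩, fun j hj => ?_, Nat.find_spec hex⟩
  obtain ⟨j', hjj', hj'⟩ : ∃ j' : Fin n, (j : ℕ) ≤ j' ∧ b j' ≤ x := by
    simpa using Nat.find_min hex hj
  exact (hb hjj').trans hj'

lemma abs_sub_le_of_forall_exists {n : ℕ} {b b' : Fin n → ℝ} {η : ℝ} (hb' : Monotone b')
    (hgap : ∀ i j, i < j → 2 * η < b j - b i) (h : ∀ j, ∃ j', |b j - b' j'| ≤ η) (j : Fin n) :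
    |b j - b' j| ≤ η := by
  choose σ hσ using h
  have σ_strictMono : StrictMono σ := fun i j hij => by
    by_contra hσij
    linarith [hgap i j hij, hb' (not_lt.1 hσij), (abs_le.1 (hσ i)).1, (abs_le.1 (hσ j)).2]
  simpa only [σ_strictMono.apply_eq] using hσ j

lemma abs_second_difference_sub_lt {f g : ℝ → ℝ} {δ : ℝ} (h : ∀ x, |f x - g x| < δ) (x e : ℝ) :
    |(f (x - e) + f (x + e) - 2 * f x) - (g (x - e) + g (x + e) - 2 * g x)| < 4 * δ := by
  have h₁ := abs_lt.1 (h (x - e))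
  have h₂ := abs_lt.1 (h (x + e))
  have h₃ := abs_lt.1 (h x)
  rw [abs_lt]
  constructor <;> linarith

lemma abs_sub_lt_of_abs_sub_mul_le {s t lam η ε : ℝ} (hs : 0 ≤ s) (hε : 0 < ε) (hη : 0 ≤ η)
    (h : |s - t| * lam ≤ η * t) (hηε : η * (s + ε) < ε * lam) : |s - t| < ε := by
  have hlt : η * s < ε * (lam - η) := by linarith
  have hlam : 0 < lam - η := pos_of_mul_pos_right ((mul_nonneg hη hs).trans_lt hlt) hε.le
  have ht : t ≤ s + |s - t| := by linarith [neg_abs_le (s - t)]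
  refine lt_of_mul_lt_mul_right ?_ hlam.le
  linarith [mul_le_mul_of_nonneg_left ht hη]

end RealFunctions

section CompFam

variable {ι : Type*}

lemma compFam_nil (f : ι → ℝ → ℝ) : compFam f [] = id := rfl

lemma compFam_cons (f : ι → ℝ → ℝ) (k : ι) (w : List ι) :
    compFam f (k :: w) = f k ∘ compFam f w := rfl

lemma compFam_append (f : ι → ℝ → ℝ) (u w : List ι) :
    compFam f (u ++ w) = compFam f u ∘ compFam f w := by
  induction u with
  | nil => rfl
  | cons k u ih => rw [List.cons_append, compFam_cons, compFam_cons, ih, Function.comp_assoc]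

lemma NoExactOverlap.eq_of_compFam_eq {f : ι → ℝ → ℝ} (hf : NoExactOverlap f) {u v : List ι}
    (hu : u ≠ []) (hlen : u.length = v.length) (huv : compFam f u = compFam f v) : u = v := by
  have hv : List.ofFn (fun i => v.get (i.cast hlen)) = v :=
    (List.ofFn_congr hlen _).trans (List.ofFn_get v)
  have := hf u.length (List.length_pos_of_ne_nil hu) u.get (fun i => v.get (i.cast hlen))
    (by rwa [List.ofFn_get, hv])
  rw [← List.ofFn_get u, this, hv]

variable {f g : ι → ℝ → ℝ} {K : ℝ≥0}

lemma compFam_lipschitzWith (hf : ∀ k, LipschitzWith K (f k)) (w : List ι) :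
    LipschitzWith (K ^ w.length) (compFam f w) := by
  induction w with
  | nil => simpa only [compFam_nil, List.length_nil, pow_zero] using LipschitzWith.id
  | cons k w ih => simpa only [compFam_cons, List.length_cons, pow_succ'] using (hf k).comp ih

lemma dist_compFam_compFam_le (hK : K < 1) (hf : ∀ k, LipschitzWith K (f k)) {δ : ℝ} (hδ : 0 ≤ δ)
    (hfg : ∀ k x, dist (f k x) (g k x) ≤ δ) (w : List ι) (x y : ℝ) :
    dist (compFam f w x) (compFam g w y) ≤ K ^ w.length * dist x y + δ / (1 - K) := by
  have hK' : 0 < 1 - (K : ℝ) := sub_pos.2 hK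
  induction w with
  | nil => simpa [compFam_nil] using div_nonneg hδ hK'.le
  | cons k w ih =>
    calc dist (f k (compFam f w x)) (g k (compFam g w y))
        ≤ dist (f k (compFam f w x)) (f k (compFam g w y)) + δ :=
          (dist_triangle _ (f k (compFam g w y)) _).trans (by gcongr; exact hfg k _)
      _ ≤ K * (K ^ w.length * dist x y + δ / (1 - K)) + δ := by
          gcongr
          exact ((hf k).dist_le_mul _ _).trans (by gcongr)
      _ = K ^ (k :: w).length * dist x y + δ / (1 - K) := by
          rw [List.length_cons]
          field_simp
          ring

lemma exists_compFam_image_subset_closedBall (hK : K < 1) (hf : ∀ k, LipschitzWith K (f k))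
    {δ R : ℝ} (hδ : 0 ≤ δ) (hδR : δ / (1 - K) < R) (hfg : ∀ k x, dist (f k x) (g k x) ≤ δ)
    {s : Set ℝ} (hs : Bornology.IsBounded s) (x₀ : ℝ) :
    ∃ n₀ : ℕ, ∀ w : List ι, n₀ ≤ w.length →
      compFam g w '' s ⊆ Metric.closedBall (compFam f w x₀) R := by
  obtain ⟨M, hM⟩ := hs.subset_closedBall x₀
  have tendsto_bound : Tendsto (fun n : ℕ => (K : ℝ) ^ n * M + δ / (1 - K)) atTop
      (𝓝 (δ / (1 - K))) := by
    simpa using ((tendsto_pow_atTop_nhds_zero_of_lt_one K.coe_nonneg hK).mul_const M).add_const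
      (δ / (1 - K) : ℝ)
  obtain ⟨n₀, hn₀⟩ := eventually_atTop.1 (tendsto_bound.eventually_le_const hδR)
  refine ⟨n₀, fun w hw => image_subset_iff.2 fun y hy => ?_⟩
  rw [mem_preimage, Metric.mem_closedBall, dist_comm]
  refine (dist_compFam_compFam_le hK hf hδ hfg w x₀ y).trans (le_trans ?_ (hn₀ _ hw))
  gcongr
  exact Metric.mem_closedBall'.1 (hM hy)

end CompFam

section SuppInt

variable {m : ℕ} {f : Fin m → ℝ → ℝ} {K : ℝ≥0}

lemma suppInt_ordConnected (f : Fin m → ℝ → ℝ) : (suppInt f).OrdConnected := by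
  unfold suppInt
  split_ifs
  · exact ordConnected_Icc
  · refine ordConnected_sInter ?_
    rintro _ ⟨-, ⟨a, b, rfl⟩, -⟩
    exact ordConnected_Icc

lemma exists_image_closedBall_subset (hK : K < 1) (hf : ∀ k, LipschitzWith K (f k)) :
    ∃ R : ℝ, 0 ≤ R ∧ ∀ k, f k '' Metric.closedBall 0 R ⊆ Metric.closedBall 0 R := by
  have hK' : 0 < 1 - (K : ℝ) := sub_pos.2 hK
  set R := (∑ k, |f k 0|) / (1 - K)
  have apply_zero_le (k : Fin m) : |f k 0| ≤ R * (1 - K) := by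
    rw [div_mul_cancel₀ _ hK'.ne']
    exact Finset.single_le_sum (f := fun k => |f k 0|) (fun k _ => abs_nonneg _)
      (Finset.mem_univ k)
  refine ⟨R, by positivity, fun k => image_subset_iff.2 fun x hx => ?_⟩
  rw [Metric.mem_closedBall] at hx
  calc dist (f k x) 0 ≤ dist (f k x) (f k 0) + dist (f k 0) 0 := dist_triangle _ _ _
    _ ≤ K * R + R * (1 - K) := by
        gcongr
        · exact ((hf k).dist_le_mul x 0).trans (by gcongr)
        · simpa using apply_zero_le k
    _ = R := by ring

lemma suppInt_isBounded (hK : K < 1) (hf : ∀ k, LipschitzWith K (f k)) :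
    Bornology.IsBounded (suppInt f) := by
  unfold suppInt
  split_ifs
  · exact Metric.isBounded_Icc _ _
  · obtain ⟨R, hR, hinv⟩ := exists_image_closedBall_subset hK hf
    refine Metric.isBounded_closedBall.subset
      (sInter_subset_of_mem ⟨⟨0, Metric.mem_closedBall_self hR⟩, ?_, hinv⟩)
    exact ⟨_, _, Real.closedBall_eq_Icc⟩

lemma fixedPoint_mem_of_isClosed {X : Type*} [MetricSpace X] [CompleteSpace X] [Nonempty X]
    {φ : X → X} (hφ : ContractingWith K φ) {s : Set X} (hs : IsClosed s) (hne : s.Nonempty)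
    (hmaps : MapsTo φ s s) : ContractingWith.fixedPoint φ hφ ∈ s := by
  obtain ⟨x, hx⟩ := hne
  exact hs.mem_of_tendsto (hφ.tendsto_iterate_fixedPoint x)
    (Eventually.of_forall fun n => hmaps.iterate n hx)

/- Without a common fixed point, the fixed point of one map is moved by some other map `f k`, so
it differs from the fixed point of `f k`, and both lie in every invariant interval. -/
lemma suppInt_nontrivial (hK : K < 1) (hf : ∀ k, LipschitzWith K (f k)) :
    (suppInt f).Nontrivial := by
  unfold suppInt
  split_ifs with hcommon
  · exact ⟨hcommon.choose, by constructor <;> linarith, hcommon.choose + 1 / 2,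
      by constructor <;> linarith, by linarith⟩
  · have contr k : ContractingWith K (f k) := ⟨hK, hf k⟩
    let z k := ContractingWith.fixedPoint (f k) (contr k)
    have z_mem (k : Fin m) : z k ∈ ⋂₀ {J : Set ℝ | J.Nonempty ∧ (∃ a b : ℝ, J = Icc a b) ∧
        ∀ k, f k '' J ⊆ J} := by
      rintro _ ⟨hne, ⟨a, b, rfl⟩, hinv⟩
      exact fixedPoint_mem_of_isClosed (contr k) isClosed_Icc hne
        (mapsTo_iff_image_subset.2 (hinv k))
    push Not at hcommon
    obtain ⟨k₀, -⟩ := hcommon 0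
    obtain ⟨k, hk⟩ := hcommon (z k₀)
    refine ⟨z k₀, z_mem k₀, z k, z_mem k, fun heq => hk ?_⟩
    rw [heq]
    exact (contr k).fixedPoint_isFixedPt

end SuppInt

section TailCounts

variable {ι : Type*}

lemma mul_countP_tails_le {P : List ι → Prop} [DecidablePred P] {N : ℕ}
    (hP : ∀ u v, u ≠ [] → P v → P (u ++ v) → N ≤ u.length) (w : List ι) :
    N * w.tails.countP (P ·) ≤ w.length + N := by
  have exists_last : w.tails.countP (P ·) = 0 ∨
      ∃ v, v <:+ w ∧ P v ∧ N * w.tails.countP (P ·) ≤ v.length + N := by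
    induction w with
    | nil =>
      by_cases h : P []
      · exact .inr ⟨[], List.suffix_rfl, h, by simp [h]⟩
      · exact .inl (by simp [h])
    | cons k w ih =>
      rw [List.tails_cons, List.countP_cons]
      by_cases h : P (k :: w)
      · refine .inr ⟨k :: w, List.suffix_rfl, h, ?_⟩
        rcases ih with h0 | ⟨v, ⟨u, rfl⟩, hv, hle⟩
        · simp [h, h0]
        · have le_length := hP (k :: u) v (by simp) hv h
          simp only [h, decide_true, if_true, mul_add, List.length_cons, List.length_append]
            at le_length hle ⊢
          omega
      · simp only [h, decide_false, Bool.false_eq_true, if_false, add_zero]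
        exact ih.imp_right fun ⟨v, hvw, hv⟩ => ⟨v, hvw.trans (List.suffix_cons k w), hv⟩
  rcases exists_last with h0 | ⟨v, hvw, -, hle⟩
  · simp [h0]
  · exact hle.trans (by gcongr; exact hvw.length_le)

lemma countP_exists_le_sum {α κ : Type*} [Fintype κ] (P : κ → α → Prop)
    [∀ i, DecidablePred (P i)] [∀ a, Decidable (∃ i, P i a)] (L : List α) :
    L.countP (fun a => ∃ i, P i a) ≤ ∑ i, L.countP (P i ·) := by
  induction L with
  | nil => simp
  | cons a L ih =>
    simp only [List.countP_cons, Finset.sum_add_distrib, decide_eq_true_eq]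
    gcongr
    split_ifs with h
    · obtain ⟨i, hi⟩ := h
      exact (if_pos hi).ge.trans (Finset.single_le_sum
        (f := fun i => if P i a then 1 else 0) (fun _ _ => Nat.zero_le _) (Finset.mem_univ i))
    · exact Nat.zero_le _

lemma le_add_mul_countP_tails {a : List ι → ℝ} {P : List ι → Prop} [DecidablePred P]
    {C δ Λ : ℝ} {n₀ : ℕ} (hδ : 0 ≤ δ) (hΛ : 0 ≤ Λ) (hshort : ∀ w, w.length ≤ n₀ → a w ≤ C)
    (hstep : ∀ k w, a (k :: w) ≤ a w + Λ)
    (hgood : ∀ k w, n₀ ≤ w.length → ¬ P (k :: w) → a (k :: w) ≤ a w + δ) (w : List ι) :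
    a w ≤ C + δ * w.length + Λ * w.tails.countP (P ·) := by
  induction w with
  | nil =>
    have := hshort [] (Nat.zero_le _)
    have : 0 ≤ Λ * ([] : List ι).tails.countP (P ·) := by positivity
    simp only [List.length_nil, Nat.cast_zero]
    linarith
  | cons k w ih =>
    rcases lt_or_ge w.length n₀ with hw | hw
    · have := hshort (k :: w) hw
      have : 0 ≤ δ * (k :: w).length + Λ * (k :: w).tails.countP (P ·) := by positivity
      linarith
    · rw [List.tails_cons, List.countP_cons, List.length_cons]
      by_cases h : P (k :: w)
      · have := hstep k w
        simp only [h, decide_true, if_true]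
        push_cast
        linarith
      · have := hgood k w hw h
        simp only [h, decide_false, Bool.false_eq_true, if_false]
        push_cast
        linarith

end TailCounts

namespace CPLIFS

variable {m : ℕ} {l : Fin m → ℕ}

section Pieces

variable (F : CPLIFS m l)

lemma continuous_S (p : Idx m l) : Continuous (F.S p) := by
  unfold S
  fun_prop

lemma eqOn_S_closure_J (k : Fin m) (i : Fin (l k + 1)) :
    EqOn (F.f k) (F.S ⟨k, i⟩) (closure (F.J k i)) :=
  EqOn.closure (fun x hx => F.haff k i x hx.1 hx.2) (F.hcont k) (F.continuous_S _)

variable {F} {k : Fin m} {x : ℝ}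

lemma J_mem_nhdsGT {i : Fin (l k + 1)} (hle : ∀ j : Fin (l k), (j : ℕ) < i → F.b k j ≤ x)
    (hlt : ∀ j : Fin (l k), (i : ℕ) ≤ j → x < F.b k j) : F.J k i ∈ 𝓝[>] x := by
  have eventually_lt : ∀ᶠ y in 𝓝 x, ∀ j : Fin (l k), (i : ℕ) ≤ j → y < F.b k j :=
    eventually_all.2 fun j => eventually_all.2 fun hj => eventually_lt_nhds (hlt j hj)
  filter_upwards [self_mem_nhdsWithin, nhdsWithin_le_nhds eventually_lt] with y hxy hy
  exact ⟨fun j hj => (hle j hj).trans_lt hxy, hy⟩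

lemma J_mem_nhdsLT {i : Fin (l k + 1)} (hlt : ∀ j : Fin (l k), (j : ℕ) < i → F.b k j < x)
    (hle : ∀ j : Fin (l k), (i : ℕ) ≤ j → x ≤ F.b k j) : F.J k i ∈ 𝓝[<] x := by
  have eventually_gt : ∀ᶠ y in 𝓝 x, ∀ j : Fin (l k), (j : ℕ) < i → F.b k j < y :=
    eventually_all.2 fun j => eventually_all.2 fun hj => eventually_gt_nhds (hlt j hj)
  filter_upwards [self_mem_nhdsWithin, nhdsWithin_le_nhds eventually_gt] with y hyx hy
  exact ⟨hy, fun j hj => lt_of_lt_of_le hyx (hle j hj)⟩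

variable (F k) in
lemma break_mem_closure_J_castSucc (j : Fin (l k)) : F.b k j ∈ closure (F.J k j.castSucc) :=
  mem_closure_of_mem_nhdsWithin
    (J_mem_nhdsLT (fun _ hi => F.hb k hi) fun _ hi => (F.hb k).monotone hi)

variable (F k) in
lemma break_mem_closure_J_succ (j : Fin (l k)) : F.b k j ∈ closure (F.J k j.succ) := by
  refine mem_closure_of_mem_nhdsWithin (J_mem_nhdsGT (fun i hi => ?_) fun i hi => ?_)
  · rw [Fin.val_succ] at hi
    exact (F.hb k).monotone (Nat.lt_succ_iff.1 hi)
  · rw [Fin.val_succ] at hi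
    exact F.hb k (Nat.succ_le_iff.1 hi)

variable (F k x) in
lemma exists_apply_eq_and_hasDerivWithinAt :
    ∃ i, F.f k x = F.S ⟨k, i⟩ x ∧ HasDerivWithinAt (F.f k) (F.ρ k i) (Ici x) x := by
  obtain ⟨i, hle, hlt⟩ := exists_fin_cut (F.hb k).monotone x
  have hJ : F.J k i ∈ 𝓝[>] x := J_mem_nhdsGT hle hlt
  have apply_eq : F.f k x = F.S ⟨k, i⟩ x :=
    F.eqOn_S_closure_J k i (mem_closure_of_mem_nhdsWithin hJ)
  have hasDerivAt_S : HasDerivAt (fun y => F.ρ k i * y + F.t k i) (F.ρ k i) x := by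
    simpa only [id, mul_one] using ((hasDerivAt_id x).const_mul (F.ρ k i)).add_const (F.t k i)
  refine ⟨i, apply_eq, hasDerivWithinAt_Ioi_iff_Ici.1 ?_⟩
  refine hasDerivAt_S.hasDerivWithinAt.congr_of_eventuallyEq ?_ apply_eq
  filter_upwards [hJ] with y hy using F.haff k i y hy.1 hy.2

variable (F) in
lemma exists_lipschitzWith : ∃ K : ℝ≥0, 0 < K ∧ K < 1 ∧ ∀ k, LipschitzWith K (F.f k) := by
  obtain ⟨ε, hε, hρ⟩ := Pi.exists_forall_pos_add_lt (x := fun p : Idx m l => |F.ρ p.1 p.2|)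
    (y := fun _ => 1) fun p => F.hρ1 p.1 p.2
  let K : ℝ≥0 := ⟨1 - min ε (1 / 2), by linarith [min_le_right ε (1 / 2)]⟩
  refine ⟨K, ?_, ?_, fun k => lipschitzWith_of_hasDerivWithinAt_Ici (F.hcont k) fun x => ?_⟩
  · rw [← NNReal.coe_pos]
    change 0 < 1 - min ε (1 / 2)
    linarith [min_le_right ε (1 / 2)]
  · rw [← NNReal.coe_lt_one]
    exact sub_lt_self 1 (lt_min hε one_half_pos)
  · obtain ⟨i, -, hderiv⟩ := F.exists_apply_eq_and_hasDerivWithinAt k x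
    refine ⟨F.ρ k i, hderiv, ?_⟩
    change |F.ρ k i| ≤ 1 - min ε (1 / 2)
    linarith [hρ ⟨k, i⟩, min_le_left ε (1 / 2)]

variable (F) in
lemma exists_le_abs_slope : ∃ c : ℝ, 0 < c ∧ ∀ k i, c ≤ |F.ρ k i| := by
  obtain ⟨c, hc, hρ⟩ := Pi.exists_forall_pos_add_lt (x := fun _ : Idx m l => (0 : ℝ))
    (y := fun p => |F.ρ p.1 p.2|) fun p => abs_pos.2 (F.hρ0 p.1 p.2)
  exact ⟨c, hc, fun k i => (zero_add c ▸ hρ ⟨k, i⟩).le⟩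

lemma exists_closedBall_subset_J {e : ℝ} (hbreak : ∀ j, e < |x - F.b k j|) :
    ∃ i, Metric.closedBall x e ⊆ F.J k i := by
  obtain ⟨i, hle, hlt⟩ := exists_fin_cut (F.hb k).monotone x
  refine ⟨i, fun y hy => ?_⟩
  rw [Metric.mem_closedBall, Real.dist_eq, abs_le] at hy
  refine ⟨fun j hj => ?_, fun j hj => ?_⟩
  · have := hbreak j
    rw [abs_of_nonneg (sub_nonneg.2 (hle j hj))] at this
    linarith
  · have := hbreak j
    rw [abs_of_neg (sub_neg.2 (hlt j hj))] at this
    linarith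

lemma closedBall_subset_J_of_break_close {G : CPLIFS m l} {i : Fin (l k + 1)} {R η : ℝ}
    (hη : 0 ≤ η) (hb : ∀ j, |F.b k j - G.b k j| ≤ η)
    (hF : Metric.closedBall x R ⊆ F.J k i) : Metric.closedBall x (R - η) ⊆ G.J k i := by
  intro y hy
  rw [Metric.mem_closedBall, Real.dist_eq, abs_le] at hy
  have hleft : y - η ∈ F.J k i := hF <| by
    rw [Metric.mem_closedBall, Real.dist_eq, abs_le]
    constructor <;> linarith
  have hright : y + η ∈ F.J k i := hF <| by
    rw [Metric.mem_closedBall, Real.dist_eq, abs_le]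
    constructor <;> linarith
  exact ⟨fun j hj => by linarith [hleft.1 j hj, (abs_le.1 (hb j)).1],
    fun j hj => by linarith [hright.2 j hj, (abs_le.1 (hb j)).2]⟩

end Pieces

section AperiodicBreaks

variable {F : CPLIFS m l}

/-- No break point is periodic: `F.b k j` never returns to itself under a composition of the
maps of the system whose innermost map is `F.f k`. -/
def AperiodicBreaks (F : CPLIFS m l) : Prop :=
  ∀ (u : List (Fin m)) (k : Fin m) (j : Fin (l k)),
    compFam F.f (u ++ [k]) (F.b k j) ≠ F.b k j

lemma exists_compFam_S_eq_affine (F : CPLIFS m l) (p : List (Idx m l)) :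
    ∃ a c : ℝ, ∀ x, compFam F.S p x = a * x + c := by
  induction p with
  | nil => exact ⟨1, 0, fun x => by simp [compFam_nil]⟩
  | cons q p ih =>
    obtain ⟨a, c, h⟩ := ih
    refine ⟨F.ρ q.1 q.2 * a, F.ρ q.1 q.2 * c + F.t q.1 q.2, fun x => ?_⟩
    rw [compFam_cons, Function.comp_apply, h]
    simp only [S]
    ring

lemma exists_compFam_S_apply_eq (F : CPLIFS m l) (u : List (Fin m)) (x : ℝ) :
    ∃ p : List (Idx m l), compFam F.S p x = compFam F.f u x := by
  induction u with
  | nil => exact ⟨[], rfl⟩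
  | cons k u ih =>
    obtain ⟨p, hp⟩ := ih
    obtain ⟨i, hi, -⟩ := F.exists_apply_eq_and_hasDerivWithinAt k (compFam F.f u x)
    refine ⟨⟨k, i⟩ :: p, ?_⟩
    rw [compFam_cons, compFam_cons, Function.comp_apply, Function.comp_apply, hp, hi]

/- A periodic break point is a common fixed point of two compositions of the generated
self-similar IFS that differ only in which of the two pieces at the break point is applied first;
affine maps with a common fixed point commute, which is an exact overlap. -/
lemma aperiodicBreaks_of_noExactOverlap (hF : NoExactOverlap F.S) : F.AperiodicBreaks := by
  intro u k j hfix
  obtain ⟨p, hp⟩ := F.exists_compFam_S_apply_eq u (F.f k (F.b k j))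
  have fix_of_mem_closure (i : Fin (l k + 1)) (hi : F.b k j ∈ closure (F.J k i)) :
      compFam F.S (p ++ [⟨k, i⟩]) (F.b k j) = F.b k j := by
    have apply_break : compFam F.S [⟨k, i⟩] (F.b k j) = F.f k (F.b k j) :=
      (F.eqOn_S_closure_J k i hi).symm
    rw [compFam_append, Function.comp_apply, apply_break, hp]
    rwa [compFam_append] at hfix
  set v := p ++ [⟨k, j.castSucc⟩] with hv
  set w := p ++ [⟨k, j.succ⟩] with hw
  obtain ⟨_, _, hv_affine⟩ := F.exists_compFam_S_eq_affine v
  obtain ⟨_, _, hw_affine⟩ := F.exists_compFam_S_eq_affine w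
  have comm : compFam F.S (v ++ w) = compFam F.S (w ++ v) := by
    rw [compFam_append F.S v, compFam_append F.S w]
    exact affine_comp_comm_of_common_fixedPoint hv_affine hw_affine
      (fix_of_mem_closure _ (F.break_mem_closure_J_castSucc k j))
      (fix_of_mem_closure _ (F.break_mem_closure_J_succ k j))
  have vw_eq_wv : v ++ w = w ++ v :=
    hF.eq_of_compFam_eq (by simp [hv]) (by simp [hv, hw]) comm
  have v_eq_w : v = w := (List.append_inj vw_eq_wv (by simp [hv, hw])).1
  simp [hv, hw, Fin.ext_iff] at v_eq_w

end AperiodicBreaks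

section BreakStability

variable (F : CPLIFS m l) {G : CPLIFS m l} {k : Fin m}

lemma exists_lt_break_sub_break :
    ∃ g : ℝ, 0 < g ∧ ∀ (k : Fin m) (i j : Fin (l k)), i < j → g < F.b k j - F.b k i := by
  obtain ⟨g, hg, hlt⟩ := Pi.exists_forall_pos_add_lt
    (ι := Σ k : Fin m, {p : Fin (l k) × Fin (l k) // p.1 < p.2}) (x := fun _ => (0 : ℝ))
    (y := fun p => F.b p.1 p.2.1.2 - F.b p.1 p.2.1.1) fun p => sub_pos.2 (F.hb p.1 p.2.2)
  exact ⟨g, hg, fun k i j hij => zero_add g ▸ hlt ⟨k, (i, j), hij⟩⟩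

lemma exists_lt_abs_slope_succ_sub :
    ∃ c : ℝ, 0 < c ∧ ∀ (k : Fin m) (j : Fin (l k)), c < |F.ρ k j.succ - F.ρ k j.castSucc| := by
  obtain ⟨c, hc, hlt⟩ := Pi.exists_forall_pos_add_lt (ι := Σ k : Fin m, Fin (l k))
    (x := fun _ => (0 : ℝ)) (y := fun q => |F.ρ q.1 q.2.succ - F.ρ q.1 q.2.castSucc|)
    fun q => abs_pos.2 (sub_ne_zero.2 (F.hconsec q.1 q.2).symm)
  exact ⟨c, hc, fun k j => zero_add c ▸ hlt ⟨k, j⟩⟩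

variable {F}

lemma second_difference_break {j : Fin (l k)} {e : ℝ} (he : 0 < e)
    (hlt : ∀ i < j, F.b k i < F.b k j - e) (hgt : ∀ i > j, F.b k j + e < F.b k i) :
    F.f k (F.b k j - e) + F.f k (F.b k j + e) - 2 * F.f k (F.b k j) =
      e * (F.ρ k j.succ - F.ρ k j.castSucc) := by
  have sub_mem : F.b k j - e ∈ F.J k j.castSucc :=
    ⟨hlt, fun i hi => (sub_lt_self _ he).trans_le ((F.hb k).monotone hi)⟩
  have add_mem : F.b k j + e ∈ F.J k j.succ := by
    refine ⟨fun i hi => ?_, fun i hi => hgt i ?_⟩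
    · rw [Fin.val_succ] at hi
      exact lt_add_of_le_of_pos ((F.hb k).monotone (Nat.lt_succ_iff.1 hi)) he
    · rw [Fin.val_succ] at hi
      exact Nat.succ_le_iff.1 hi
  have apply_sub := F.eqOn_S_closure_J k _ (subset_closure sub_mem)
  have apply_add := F.eqOn_S_closure_J k _ (subset_closure add_mem)
  have apply_left := F.eqOn_S_closure_J k _ (F.break_mem_closure_J_castSucc k j)
  have apply_right := F.eqOn_S_closure_J k _ (F.break_mem_closure_J_succ k j)
  simp only [S] at apply_sub apply_add apply_left apply_right
  linear_combination apply_sub + apply_add - apply_left - apply_right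

lemma second_difference_eq_zero {x e : ℝ} (he : 0 ≤ e) (hbreak : ∀ j, e < |x - F.b k j|) :
    F.f k (x - e) + F.f k (x + e) - 2 * F.f k x = 0 := by
  obtain ⟨i, hi⟩ := exists_closedBall_subset_J hbreak
  have apply_eq (y : ℝ) (hy : |y - x| ≤ e) : F.f k y = F.ρ k i * y + F.t k i :=
    F.eqOn_S_closure_J k i (subset_closure (hi hy))
  rw [apply_eq (x - e) (by simp [abs_of_nonneg he]), apply_eq (x + e) (by simp [abs_of_nonneg he]),
    apply_eq x (by simpa using he)]
  ring

/- The second difference of a continuous piecewise affine map detects its break points, and is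
stable under uniformly small perturbations. -/
lemma exists_break_abs_sub_le {j : Fin (l k)} {e δ : ℝ} (he : 0 < e)
    (hlt : ∀ i < j, F.b k i < F.b k j - e) (hgt : ∀ i > j, F.b k j + e < F.b k i)
    (hδ : 4 * δ ≤ e * |F.ρ k j.succ - F.ρ k j.castSucc|)
    (hFG : ∀ x, |F.f k x - G.f k x| < δ) : ∃ j', |F.b k j - G.b k j'| ≤ e := by
  by_contra! hbreak
  have := abs_second_difference_sub_lt hFG (F.b k j) e
  rw [second_difference_break he hlt hgt, second_difference_eq_zero he.le hbreak, sub_zero,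
    abs_mul, abs_of_pos he] at this
  linarith

variable (F) in
lemma exists_forall_abs_break_sub_le {η : ℝ} (hη : 0 < η) :
    ∃ δ : ℝ, 0 < δ ∧ ∀ G : CPLIFS m l, (∀ k x, |F.f k x - G.f k x| < δ) →
      ∀ k j, |F.b k j - G.b k j| ≤ η := by
  obtain ⟨g, hg, hgap⟩ := F.exists_lt_break_sub_break
  obtain ⟨c, hc, hjump⟩ := F.exists_lt_abs_slope_succ_sub
  set e := min η (g / 2)
  have he : 0 < e := lt_min hη (half_pos hg)
  have heη : e ≤ η := min_le_left _ _
  have heg : e ≤ g / 2 := min_le_right _ _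
  refine ⟨e * c / 4, by positivity, fun G hFG k j => le_trans ?_ heη⟩
  refine abs_sub_le_of_forall_exists (G.hb k).monotone (fun i j hij => ?_) (fun j => ?_) j
  · linarith [hgap k i j hij]
  · refine exists_break_abs_sub_le he (fun i hi => ?_) (fun i hi => ?_) ?_ (hFG k)
    · linarith [hgap k i j hi]
    · linarith [hgap k j i hi]
    · linarith [mul_le_mul_of_nonneg_left (hjump k j).le he.le]

end BreakStability

section BreakVisits

variable {F : CPLIFS m l}

/-- The orbit of `x` along the tail of the word `v` lands within `R` of the break point `q` of the
map which the first letter of `v` applies to it. -/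
def VisitsBreak (F : CPLIFS m l) (R x : ℝ) (q : Σ k, Fin (l k)) (v : List (Fin m)) : Prop :=
  ∃ w, v = q.1 :: w ∧ |compFam F.f w x - F.b q.1 q.2| ≤ R

/-- No break point comes back to within `2 * R` of itself under a composition of at most `N` maps
that starts with the map it belongs to. -/
def BreaksAvoidReturn (F : CPLIFS m l) (N : ℕ) (R : ℝ) : Prop :=
  ∀ u : List (Fin m), u.length < N → ∀ (k : Fin m) (j : Fin (l k)),
    2 * R < |compFam F.f (u ++ [k]) (F.b k j) - F.b k j|

lemma AperiodicBreaks.exists_breaksAvoidReturn (hF : F.AperiodicBreaks) (N : ℕ) :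
    ∃ R : ℝ, 0 < R ∧ F.BreaksAvoidReturn N R := by
  have := (List.finite_length_lt (Fin m) N).to_subtype
  obtain ⟨ε, hε, hlt⟩ := Pi.exists_forall_pos_add_lt
    (ι := {u : List (Fin m) | u.length < N} × Σ k, Fin (l k)) (x := fun _ => (0 : ℝ))
    (y := fun p => |compFam F.f (p.1 ++ [p.2.1]) (F.b p.2.1 p.2.2) - F.b p.2.1 p.2.2|)
    fun p => abs_pos.2 (sub_ne_zero.2 (hF p.1 p.2.1 p.2.2))
  refine ⟨ε / 2, half_pos hε, fun u hu k j => ?_⟩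
  linarith [hlt (⟨u, hu⟩, ⟨k, j⟩)]

variable {N : ℕ} {R x : ℝ}

lemma BreaksAvoidReturn.le_length (hR : F.BreaksAvoidReturn N R)
    (hF : ∀ k, LipschitzWith 1 (F.f k)) {q : Σ k, Fin (l k)} {u v : List (Fin m)} (hu : u ≠ [])
    (hv : F.VisitsBreak R x q v) (huv : F.VisitsBreak R x q (u ++ v)) : N ≤ u.length := by
  obtain ⟨w, rfl, hw⟩ := hv
  obtain ⟨k, u, rfl⟩ := List.exists_cons_of_ne_nil hu
  obtain ⟨w', hw', hreturn⟩ := huv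
  obtain ⟨-, rfl⟩ := List.cons.inj hw'
  set g := compFam F.f (u ++ [q.1])
  have comp_eq : compFam F.f (u ++ q.1 :: w) x = g (compFam F.f w x) := by
    rw [List.append_cons, compFam_append, Function.comp_apply]
  have lipschitz_le : |g (F.b q.1 q.2) - g (compFam F.f w x)| ≤ R := by
    have := (compFam_lipschitzWith hF (u ++ [q.1])).dist_le_mul (F.b q.1 q.2) (compFam F.f w x)
    rw [one_pow, NNReal.coe_one, one_mul, Real.dist_eq, Real.dist_eq, abs_sub_comm (F.b q.1 q.2)]
      at this
    exact this.trans hw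
  have hreturn' : |g (compFam F.f w x) - F.b q.1 q.2| ≤ R := comp_eq ▸ hreturn
  rw [List.length_cons]
  by_contra! hlen
  have := abs_sub_le (g (F.b q.1 q.2)) (g (compFam F.f w x)) (F.b q.1 q.2)
  linarith [hR u (by omega) q.1 q.2]

open Classical in
/-- The number of times the orbit of `x` along the word `w` passes within `R` of a break point of
the map that is applied next. -/
def breakVisitCount (F : CPLIFS m l) (R x : ℝ) (w : List (Fin m)) : ℕ :=
  w.tails.countP fun v => ∃ q, F.VisitsBreak R x q v

lemma BreaksAvoidReturn.mul_breakVisitCount_le (hR : F.BreaksAvoidReturn N R)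
    (hF : ∀ k, LipschitzWith 1 (F.f k)) (x : ℝ) (w : List (Fin m)) :
    N * F.breakVisitCount R x w ≤ Fintype.card (Σ k, Fin (l k)) * (w.length + N) := by
  classical
  calc N * F.breakVisitCount R x w
      ≤ N * ∑ q, w.tails.countP (F.VisitsBreak R x q ·) := by
        gcongr
        exact countP_exists_le_sum (F.VisitsBreak R x) w.tails
    _ = ∑ q, N * w.tails.countP (F.VisitsBreak R x q ·) := Finset.mul_sum _ _ _
    _ ≤ ∑ _q : Σ k, Fin (l k), (w.length + N) := by
        gcongr with q
        exact mul_countP_tails_le (fun u v => hR.le_length hF) w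
    _ = Fintype.card (Σ k, Fin (l k)) * (w.length + N) := by
        rw [Finset.sum_const, Finset.card_univ, smul_eq_mul]

lemma BreaksAvoidReturn.exists_forall_le_add_mul_length (hR : F.BreaksAvoidReturn N R)
    (hF : ∀ k, LipschitzWith 1 (F.f k)) (hN : 0 < N) {a : List (Fin m) → ℝ} {η Λ : ℝ} {n₀ : ℕ}
    (hη : 0 ≤ η) (hΛ : 0 ≤ Λ) (hΛη : Fintype.card (Σ k, Fin (l k)) * Λ ≤ η * N)
    (hstep : ∀ k w, a (k :: w) ≤ a w + Λ)
    (hgood : ∀ k w, n₀ ≤ w.length → (¬ ∃ q, F.VisitsBreak R x q (k :: w)) →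
      a (k :: w) ≤ a w + η) :
    ∃ C : ℝ, ∀ w, a w ≤ C + 2 * η * w.length := by
  classical
  obtain ⟨C, hC⟩ := ((List.finite_length_le (Fin m) n₀).image a).bddAbove
  refine ⟨C + η * N, fun w => ?_⟩
  have le_count : a w ≤ C + η * w.length + Λ * F.breakVisitCount R x w :=
    le_add_mul_countP_tails hη hΛ (fun w hw => hC (mem_image_of_mem a hw)) hstep hgood w
  have count_le : (N : ℝ) * F.breakVisitCount R x w ≤
      Fintype.card (Σ k, Fin (l k)) * (w.length + N) := by
    exact_mod_cast hR.mul_breakVisitCount_le hF x w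
  have mul_count_le : Λ * F.breakVisitCount R x w ≤ η * (w.length + N) := by
    refine le_of_mul_le_mul_left ?_ (Nat.cast_pos (α := ℝ).2 hN)
    calc (N : ℝ) * (Λ * F.breakVisitCount R x w)
        = Λ * (N * F.breakVisitCount R x w) := by ring
      _ ≤ Λ * (Fintype.card (Σ k, Fin (l k)) * (w.length + N)) := by gcongr
      _ = Fintype.card (Σ k, Fin (l k)) * Λ * (w.length + N) := by ring
      _ ≤ η * N * (w.length + N) := by gcongr
      _ = N * (η * (w.length + N)) := by ring
  linarith

end BreakVisits

section Cylinders

/-- The cylinder interval `I_w = f_w(I)` of a word `w`. -/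
def cyl (F : CPLIFS m l) (w : List (Fin m)) : Set ℝ := compFam F.f w '' F.supp

/-- The logarithm of the length of the cylinder interval of a word. -/
def logDiam (F : CPLIFS m l) (w : List (Fin m)) : ℝ := Real.log (Metric.diam (F.cyl w))

variable (F : CPLIFS m l) (k : Fin m) (w : List (Fin m))

lemma cyl_nil : F.cyl [] = F.supp := image_id _

lemma cyl_cons : F.cyl (k :: w) = F.f k '' F.cyl w :=
  image_comp (F.f k) (compFam F.f w) F.supp

lemma cyl_ordConnected : (F.cyl w).OrdConnected := by
  induction w with
  | nil => exact F.cyl_nil ▸ suppInt_ordConnected F.f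
  | cons k w ih =>
    rw [cyl_cons, ← isPreconnected_iff_ordConnected]
    exact (isPreconnected_iff_ordConnected.2 ih).image _ (F.hcont k).continuousOn

lemma supp_isBounded : Bornology.IsBounded F.supp :=
  let ⟨_, _, hK, hF⟩ := F.exists_lipschitzWith
  suppInt_isBounded hK hF

lemma cyl_isBounded : Bornology.IsBounded (F.cyl w) :=
  let ⟨_, _, _, hF⟩ := F.exists_lipschitzWith
  (compFam_lipschitzWith hF w).isBounded_image F.supp_isBounded

variable {F} in
lemma diam_cyl_le_card_div_mul {c : ℝ} (hc : 0 < c) (hρ : ∀ k i, c ≤ |F.ρ k i|) :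
    Metric.diam (F.cyl w) ≤
      Fintype.card (Idx m l) / c * Metric.diam (F.cyl (k :: w)) := by
  have hbdd := F.cyl_isBounded (k :: w)
  rw [cyl_cons] at hbdd ⊢
  refine diam_le_card_div_mul_diam_image (a := fun p => F.ρ p.1 p.2) (c := fun p => F.t p.1 p.2)
    hc (fun p => hρ p.1 p.2) (fun x _ => ?_) (F.cyl_ordConnected w) hbdd
  obtain ⟨i, hi, -⟩ := F.exists_apply_eq_and_hasDerivWithinAt k x
  exact ⟨⟨k, i⟩, hi⟩

lemma diam_cyl_pos : 0 < Metric.diam (F.cyl w) := by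
  induction w with
  | nil =>
    obtain ⟨_, _, hK, hF⟩ := F.exists_lipschitzWith
    exact F.cyl_nil ▸ Metric.diam_pos (suppInt_nontrivial hK hF) F.supp_isBounded
  | cons k w ih =>
    obtain ⟨c, hc, hρ⟩ := F.exists_le_abs_slope
    exact pos_of_mul_pos_right (ih.trans_le (diam_cyl_le_card_div_mul k w hc hρ)) (by positivity)

variable {F k w}

lemma logDiam_cons_le {K : ℝ≥0} (hK : 0 < K) (hF : LipschitzWith K (F.f k)) :
    F.logDiam (k :: w) ≤ F.logDiam w + Real.log K := by
  have diam_le : Metric.diam (F.cyl (k :: w)) ≤ K * Metric.diam (F.cyl w) := by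
    rw [cyl_cons]
    exact hF.diam_image_le _ (F.cyl_isBounded w)
  have := Real.log_le_log (F.diam_cyl_pos (k :: w)) diam_le
  rwa [Real.log_mul (NNReal.coe_pos.2 hK).ne' (F.diam_cyl_pos w).ne', add_comm] at this

variable (F k w) in
lemma logDiam_cons_le_logDiam : F.logDiam (k :: w) ≤ F.logDiam w := by
  obtain ⟨K, hK0, hK1, hF⟩ := F.exists_lipschitzWith
  have := Real.log_nonpos K.coe_nonneg (NNReal.coe_le_one.2 hK1.le)
  linarith [logDiam_cons_le (w := w) hK0 (hF k)]

lemma logDiam_le_add_logDiam_cons {c : ℝ} (hc : 0 < c) (hρ : ∀ k i, c ≤ |F.ρ k i|) :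
    F.logDiam w ≤ Real.log (Fintype.card (Idx m l) / c) + F.logDiam (k :: w) := by
  have card_pos : (0 : ℝ) < Fintype.card (Idx m l) :=
    Nat.cast_pos.2 (Fintype.card_pos_iff.2 ⟨⟨k, 0⟩⟩)
  rw [logDiam, logDiam, ← Real.log_mul (by positivity) (F.diam_cyl_pos _).ne']
  exact Real.log_le_log (F.diam_cyl_pos w) (diam_cyl_le_card_div_mul k w hc hρ)

lemma logDiam_cons_of_subset_J {i : Fin (l k + 1)} (hi : F.cyl w ⊆ F.J k i) :
    F.logDiam (k :: w) = Real.log |F.ρ k i| + F.logDiam w := by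
  have eqOn : EqOn (F.f k) (fun x => F.ρ k i * x + F.t k i) (F.cyl w) :=
    (F.eqOn_S_closure_J k i).mono (hi.trans subset_closure)
  rw [logDiam, logDiam, cyl_cons, diam_image_of_eqOn_affine eqOn,
    Real.log_mul (abs_pos.2 (F.hρ0 k i)).ne' (F.diam_cyl_pos w).ne']

variable (F) in
lemma exists_logDiam_le :
    ∃ lam : ℝ, 0 < lam ∧ ∀ w, F.logDiam w ≤ F.logDiam [] - lam * w.length := by
  obtain ⟨K, hK0, hK1, hF⟩ := F.exists_lipschitzWith
  have log_neg := Real.log_neg (NNReal.coe_pos.2 hK0) (NNReal.coe_lt_one.2 hK1)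
  refine ⟨-Real.log K, neg_pos.2 log_neg, fun w => ?_⟩
  induction w with
  | nil => simp
  | cons k w ih =>
    rw [List.length_cons]
    push_cast
    linarith [logDiam_cons_le (w := w) hK0 (hF k)]

variable (F) in
lemma exists_le_logDiam : ∃ Λ : ℝ, ∀ w, F.logDiam [] - Λ * w.length ≤ F.logDiam w := by
  obtain ⟨c, hc, hρ⟩ := F.exists_le_abs_slope
  refine ⟨Real.log (Fintype.card (Idx m l) / c), fun w => ?_⟩
  induction w with
  | nil => simp
  | cons k w ih =>
    rw [List.length_cons]
    push_cast
    linarith [logDiam_le_add_logDiam_cons (k := k) (w := w) hc hρ]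

variable (F) in
lemma pressure_eq_wordPressure (s : ℝ) :
    pressure F.f s = wordPressure fun w => s * F.logDiam w := by
  have rpow_eq (w : List (Fin m)) :
      Metric.diam (compFam F.f w '' suppInt F.f) ^ s = Real.exp (s * F.logDiam w) := by
    rw [mul_comm]
    exact Real.rpow_def_of_pos (F.diam_cyl_pos w) s
  unfold pressure wordPressure wordPressureSeq
  simp only [rpow_eq]

end Cylinders

section Distortion

variable {F G : CPLIFS m l} {k : Fin m} {w : List (Fin m)}

lemma abs_logDiam_sub_cons_le {c : ℝ} (hc : 0 < c) (hF : ∀ k i, c ≤ |F.ρ k i|)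
    (hG : ∀ k i, c ≤ |G.ρ k i|) :
    |G.logDiam (k :: w) - F.logDiam (k :: w)| ≤
      |G.logDiam w - F.logDiam w| + Real.log (Fintype.card (Idx m l) / c) := by
  have hF_ge := logDiam_le_add_logDiam_cons (k := k) (w := w) hc hF
  have hG_ge := logDiam_le_add_logDiam_cons (k := k) (w := w) hc hG
  have hF_le := F.logDiam_cons_le_logDiam k w
  have hG_le := G.logDiam_cons_le_logDiam k w
  have := le_abs_self (G.logDiam w - F.logDiam w)
  have := neg_abs_le (G.logDiam w - F.logDiam w)
  rw [abs_le]
  constructor <;> linarith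

lemma abs_logDiam_sub_cons_le_of_subset_J {i : Fin (l k + 1)} (hF : F.cyl w ⊆ F.J k i)
    (hG : G.cyl w ⊆ G.J k i) :
    |G.logDiam (k :: w) - F.logDiam (k :: w)| ≤
      |G.logDiam w - F.logDiam w| + abs (Real.log |F.ρ k i| - Real.log |G.ρ k i|) := by
  rw [logDiam_cons_of_subset_J hF, logDiam_cons_of_subset_J hG, add_sub_add_comm, add_comm,
    abs_sub_comm (Real.log |F.ρ k i|)]
  exact abs_add_le _ _

/- Away from its break points an orbit of `F` keeps the whole cylinders of `F` and of `G` inside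
corresponding pieces, so that their lengths are multiplied by the corresponding slopes. -/
lemma exists_abs_logDiam_sub_cons_le_of_not_visitsBreak {K : ℝ≥0} (hK : K < 1)
    (hF : ∀ k, LipschitzWith K (F.f k)) {δ η R : ℝ} (hδ : 0 ≤ δ) (hR : 0 < R)
    (hδR : δ / (1 - K) < R / 2) (hFG : ∀ k x, |F.f k x - G.f k x| ≤ δ)
    (hb : ∀ k j, |F.b k j - G.b k j| ≤ R / 2)
    (hρ : ∀ k i, abs (Real.log |F.ρ k i| - Real.log |G.ρ k i|) ≤ η) (x : ℝ) :
    ∃ n₀ : ℕ, ∀ (k : Fin m) (w : List (Fin m)), n₀ ≤ w.length →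
      (¬ ∃ q, F.VisitsBreak R x q (k :: w)) →
        |G.logDiam (k :: w) - F.logDiam (k :: w)| ≤ |G.logDiam w - F.logDiam w| + η := by
  obtain ⟨nF, hnF⟩ := exists_compFam_image_subset_closedBall (g := F.f) (R := R / 2) hK hF
    le_rfl (by simpa using half_pos hR) (fun k y => (dist_self (F.f k y)).le) F.supp_isBounded x
  obtain ⟨nG, hnG⟩ := exists_compFam_image_subset_closedBall (g := G.f) hK hF hδ hδR hFG
    G.supp_isBounded x
  refine ⟨max nF nG, fun k w hw hvisit => ?_⟩
  have far_from_breaks (j : Fin (l k)) : R < |compFam F.f w x - F.b k j| := by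
    by_contra! hle
    exact hvisit ⟨⟨k, j⟩, w, rfl, hle⟩
  obtain ⟨i, hi⟩ := exists_closedBall_subset_J far_from_breaks
  have hF_sub : F.cyl w ⊆ F.J k i := (hnF w ((le_max_left _ _).trans hw)).trans <|
    (Metric.closedBall_subset_closedBall (half_le_self hR.le)).trans hi
  have hG_sub : G.cyl w ⊆ G.J k i := (hnG w ((le_max_right _ _).trans hw)).trans <| by
    simpa only [sub_half] using closedBall_subset_J_of_break_close (half_pos hR).le (hb k) hi
  exact (abs_logDiam_sub_cons_le_of_subset_J hF_sub hG_sub).trans (by gcongr; exact hρ k i)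

lemma exp_neg_one_mul_le_abs_slope {c : ℝ} (hc : 0 < c) (hF : ∀ k i, c ≤ |F.ρ k i|)
    (hρ : ∀ k i, abs (Real.log |F.ρ k i| - Real.log |G.ρ k i|) ≤ 1) (k : Fin m)
    (i : Fin (l k + 1)) :
    Real.exp (-1) * c ≤ |G.ρ k i| := by
  have := Real.log_le_log hc (hF k i)
  have := (abs_le.1 (hρ k i)).2
  rw [← Real.log_le_log_iff (by positivity) (abs_pos.2 (G.hρ0 k i)),
    Real.log_mul (Real.exp_pos _).ne' hc.ne', Real.log_exp]
  linarith

lemma AperiodicBreaks.exists_abs_logDiam_sub_le (hF : F.AperiodicBreaks) {η : ℝ} (hη : 0 < η) :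
    ∃ δ : ℝ, 0 < δ ∧ ∀ G : CPLIFS m l,
      (∀ k i, abs (Real.log |F.ρ k i| - Real.log |G.ρ k i|) < δ) →
      (∀ k x, |F.f k x - G.f k x| < δ) →
      ∃ C : ℝ, ∀ w, |G.logDiam w - F.logDiam w| ≤ C + η * w.length := by
  obtain ⟨K, -, hK, hLip⟩ := F.exists_lipschitzWith
  obtain ⟨c, hc, hFc⟩ := F.exists_le_abs_slope
  set c' := Real.exp (-1) * c
  have hc' : c' ≤ c := mul_le_of_le_one_left hc.le (Real.exp_le_one_iff.2 (by norm_num))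
  set Λ := |Real.log (Fintype.card (Idx m l) / c')|
  obtain ⟨N, hN⟩ := exists_nat_gt (Fintype.card (Σ k, Fin (l k)) * Λ / (η / 2))
  have hN0 : 0 < N := Nat.cast_pos (α := ℝ).1 (lt_of_le_of_lt (by positivity) hN)
  obtain ⟨R, hR0, hR⟩ := hF.exists_breaksAvoidReturn N
  obtain ⟨δb, hδb, hbreak⟩ := F.exists_forall_abs_break_sub_le (half_pos hR0)
  have hK' : 0 < 1 - (K : ℝ) := sub_pos.2 hK
  set δR := R / 4 * (1 - K) with hδR
  have hδR0 : 0 < δR := by positivity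
  have hδR_div : δR / (1 - K) < R / 2 := by
    rw [hδR, mul_div_cancel_right₀ _ hK'.ne']
    linarith
  refine ⟨min (min δb δR) (min (η / 2) 1), by positivity, fun G hρ hfg => ?_⟩
  simp only [lt_min_iff] at hρ hfg
  have hGc : ∀ k i, c' ≤ |G.ρ k i| :=
    exp_neg_one_mul_le_abs_slope hc hFc fun k i => (hρ k i).2.2.le
  obtain ⟨n₀, hgood⟩ := exists_abs_logDiam_sub_cons_le_of_not_visitsBreak hK hLip hδR0.le hR0
    hδR_div (fun k x => (hfg k x).1.2.le) (hbreak G fun k x => (hfg k x).1.1)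
    (fun k i => (hρ k i).2.1.le) 0
  obtain ⟨C, hC⟩ := hR.exists_forall_le_add_mul_length
    (a := fun w => |G.logDiam w - F.logDiam w|) (fun k => (hLip k).weaken hK.le) hN0
    (half_pos hη).le (abs_nonneg _) ((div_lt_iff₀' (half_pos hη)).1 hN).le
    (fun k w => (abs_logDiam_sub_cons_le (by positivity) (fun k i => hc'.trans (hFc k i))
      hGc).trans (add_le_add_right (le_abs_self _) _)) hgood
  exact ⟨C, fun w => (hC w).trans_eq (by ring)⟩

end Distortion

end CPLIFS

theorem natural_dimension_continuous_of_noExactOverlap_general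
    {m : ℕ} {l : Fin m → ℕ} (F : CPLIFS m l) (hF : F.AperiodicBreaks)
    (sF : ℝ) (hsF0 : 0 ≤ sF) (hsF : pressure F.f sF = 0) (ε : ℝ) (hε : 0 < ε) :
    ∃ δ > (0 : ℝ), ∀ G : CPLIFS m l,
      (∀ k i, abs (Real.log |F.ρ k i| - Real.log |G.ρ k i|) < δ) →
      (∀ k x, |F.f k x - G.f k x| < δ) →
      ∀ sG : ℝ, 0 ≤ sG → pressure G.f sG = 0 → |sF - sG| < ε := by
  obtain ⟨lam, hlam, hF_le⟩ := F.exists_logDiam_le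
  obtain ⟨Λ, hF_ge⟩ := F.exists_le_logDiam
  set η := ε * lam / (sF + ε + 1)
  have hη : η * (sF + ε + 1) = ε * lam := div_mul_cancel₀ _ (by positivity)
  have hη0 : 0 < η := by positivity
  obtain ⟨δ, hδ, hclose⟩ := hF.exists_abs_logDiam_sub_le hη0
  refine ⟨δ, hδ, fun G hρ hfg sG hsG0 hsG => ?_⟩
  obtain ⟨C, hC⟩ := hclose G hρ hfg
  have : Nonempty (Fin m) := ⟨⟨0, by linarith [F.hm]⟩⟩
  rw [CPLIFS.pressure_eq_wordPressure] at hsF hsG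
  have abs_mul_le : |sF - sG| * lam ≤ η * sG :=
    abs_sub_mul_le_of_wordPressure_eq_zero hF_le hF_ge hC hsF0 hsG0 hsF hsG
  exact abs_sub_lt_of_abs_sub_mul_le hsF0 hε hη0.le abs_mul_le (by linarith)

/-- **Theorem pm78.** Let `F` be a CPLIFS whose generated self-similar IFS has
no exact overlapping.  Then for every `ε > 0` there exists `δ > 0` such that every CPLIFS
`G` that is δ-close to `F` satisfies `|s_F - s_G| < ε`, where `s_F, s_G` are the natural
dimensions (the unique nonnegative zeros of the natural pressure functions). -/
theorem natural_dimension_continuous_of_noExactOverlap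
    {m : ℕ} {l : Fin m → ℕ} (F : CPLIFS m l)
    (hno : NoExactOverlap F.S)
    (sF : ℝ) (hsF0 : 0 ≤ sF) (hsF : pressure F.f sF = 0)
    (ε : ℝ) (hε : 0 < ε) :
    ∃ δ > (0 : ℝ), ∀ G : CPLIFS m l, CPLIFS.Close δ F G →
      ∀ sG : ℝ, 0 ≤ sG → pressure G.f sG = 0 → |sF - sG| < ε := by
  obtain ⟨δ, hδ, h⟩ := natural_dimension_continuous_of_noExactOverlap_general F
    (CPLIFS.aperiodicBreaks_of_noExactOverlap hno) sF hsF0 hsF ε hε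
  exact ⟨δ, hδ, fun G hG => h G hG.2.1 hG.2.2⟩

end
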